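/- No topological space definable in an o-minimal structure is homeomorphic to the Appert space, i.e. the topology on ℕ in which a set U is open if and only if 0 ∉ U or lim_{n→∞} |U ∩ {1, …, n}| / n = 1. -/

import Mathlib

open FirstOrder FirstOrder.Language Set Cardinal Filter Topology

universe u

/-- A subset of a linear order is a finite union of points and open intervals
with endpoints in `M ∪ {-∞, +∞}` (lower endpoints in `WithBot M = M ∪ {-∞}`,
upper endpoints in `WithTop M = M ∪ {+∞}`). -/
def IsFinUnionPointsIntervals {M : Type*} [LinearOrder M] (s : Set M) : Prop :=
  ∃ (P : Finset M) (I : Finset (WithBot M × WithTop M)),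
    s = ↑P ∪ ⋃ p ∈ I, {x : M | p.1 < (x : WithBot M) ∧ (x : WithTop M) < p.2}

/-- `M` is an o-minimal `L`-structure: the language defines the linear order of `M`,
which is dense and without endpoints, and every subset of `M` definable with parameters
is a finite union of points and open intervals with endpoints in `M ∪ {-∞, +∞}`. -/
structure IsOMinimal (L : FirstOrder.Language) (M : Type*) [L.Structure M] [LinearOrder M] :
    Prop where
  denselyOrdered : DenselyOrdered M
  noMinOrder : NoMinOrder M
  noMaxOrder : NoMaxOrder M
  definable_lt : (∅ : Set M).Definable L {x : Fin 2 → M | x 0 < x 1}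
  tame : ∀ s : Set M, (Set.univ : Set M).Definable₁ L s → IsFinUnionPointsIntervals s

/-- A topological space `(A, t)` is definable in the structure `M` when `A ⊆ M^n` is a
definable set and the topology `t` admits a definable basis, i.e. a basis of the form
`{ψ(A;b) : b ∈ S}` for some formula `ψ(x;y)` and definable set `S ⊆ M^|y|`. -/
def IsDefinableTopSpace (L : FirstOrder.Language) {M : Type*} [L.Structure M] {n : ℕ}
    (A : Set (Fin n → M)) (t : TopologicalSpace A) : Prop :=
  (Set.univ : Set M).Definable L A ∧
  ∃ (k : ℕ) (ψ : L.Formula (Fin n ⊕ Fin k)) (S : Set (Fin k → M)),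
    (Set.univ : Set M).Definable L S ∧
    @TopologicalSpace.IsTopologicalBasis A t
      ((fun b => {x : A | ψ.Realize (Sum.elim (x : Fin n → M) b)}) '' S)

/-- Openness in the Appert space: `U ⊆ ℕ` is open iff `0 ∉ U` or the density
`|U ∩ {1, …, n}| / n` tends to `1` as `n → ∞`. -/
def AppertIsOpen (U : Set ℕ) : Prop :=
  0 ∉ U ∨ Tendsto (fun m : ℕ => (Nat.card ↥(U ∩ Set.Icc 1 m) : ℝ) / m) atTop (𝓝 1)

/-!
A countable definable space in an o-minimal structure is second countable, while the Appert space
is not even first countable at `0`.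

For second countability, let `D` be countable and definable and let `R` be definable. The sets
`{x ∈ D | (x, b, c) ∈ R}` are only countably many, by induction on the number of parameters. Fix `b`
and let the last parameter `c` vary. The fibres `Y x = {c | (x, b, c) ∈ R}` have finite frontiers.
If `c` lies in one of these frontiers, or in the finite frontier of their union `S` over `x ∈ D`,
then `c` is one of finitely many points definable from `b`, the choice of `x` costing only a
countable union. Otherwise no `Y x` changes between `c` and the preceding point `e` of the frontier
of `S`, or `-∞`, so that `c ∈ Y x` says that `Y x` contains the right germ at `e`, respectively the
germ at `-∞`; again `e` is one of finitely many points definable from `b`.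

At `0` in the Appert space, given open neighbourhoods `U i`, choose `x i ∈ U i` of size at least
`(i + 1) ^ 2`: the complement of these points has density `1` and contains no `U i`.
-/

section Order

theorem notMem_frontier_iff_eventually {X : Type*} [TopologicalSpace X] {s : Set X} {q : X} :
    q ∉ frontier s ↔ ∀ᶠ u in 𝓝 q, (u ∈ s ↔ q ∈ s) := by
  by_cases hq : q ∈ s
  · rw [← mem_interior_iff_notMem_frontier hq, mem_interior_iff_mem_nhds]
    simp only [hq, iff_true]
    rfl
  · rw [← frontier_compl, ← mem_interior_iff_notMem_frontier (mem_compl hq),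
      mem_interior_iff_mem_nhds]
    simp only [hq, iff_false]
    rfl

variable {M : Type*} [LinearOrder M] {s s' Q Q' : Set M}

/-- Membership in `s` does not change along any closed interval that avoids `Q`. In an order that
is not complete this is not implied by `Q` containing the frontier of `s`: a cut may separate `s`
from its complement. -/
def IsConstantOff (s Q : Set M) : Prop :=
  ∀ ⦃x y : M⦄, x ≤ y → Disjoint (Icc x y) Q → (x ∈ s ↔ y ∈ s)

namespace IsConstantOff

theorem self (s : Set M) : IsConstantOff s s := fun _ _ hxy hdisj =>
  iff_of_false (disjoint_left.1 hdisj (left_mem_Icc.2 hxy))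
    (disjoint_left.1 hdisj (right_mem_Icc.2 hxy))

theorem mono (h : IsConstantOff s Q) (hQ : Q ⊆ Q') : IsConstantOff s Q' :=
  fun _ _ hxy hdisj => h hxy (hdisj.mono_right hQ)

theorem union (h : IsConstantOff s Q) (h' : IsConstantOff s' Q') :
    IsConstantOff (s ∪ s') (Q ∪ Q') := fun _ _ hxy hdisj =>
  or_congr (h hxy (disjoint_union_right.1 hdisj).1) (h' hxy (disjoint_union_right.1 hdisj).2)

theorem inter (h : IsConstantOff s Q) (h' : IsConstantOff s' Q') :
    IsConstantOff (s ∩ s') (Q ∪ Q') := fun _ _ hxy hdisj =>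
  and_congr (h hxy (disjoint_union_right.1 hdisj).1) (h' hxy (disjoint_union_right.1 hdisj).2)

theorem biUnion {ι : Type*} {I : Set ι} {s Q : ι → Set M} (h : ∀ i ∈ I, IsConstantOff (s i) (Q i)) :
    IsConstantOff (⋃ i ∈ I, s i) (⋃ i ∈ I, Q i) := fun x y hxy hdisj => by
  simp only [mem_iUnion, exists_prop]
  refine exists_congr fun i => and_congr_right fun hi => h i hi hxy ?_
  exact hdisj.mono_right (subset_biUnion_of_mem hi)

theorem lt_coe (a : WithBot M) : IsConstantOff {x : M | a < x} ((↑) ⁻¹' {a}) := by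
  intro x y hxy hdisj
  refine ⟨fun hx => hx.trans_le (WithBot.coe_le_coe.2 hxy), fun hy => ?_⟩
  by_contra hx
  have ha : a ≠ ⊥ := fun h => hx (h ▸ WithBot.bot_lt_coe x)
  obtain ⟨a, rfl⟩ := WithBot.ne_bot_iff_exists.1 ha
  exact disjoint_left.1 hdisj
    ⟨WithBot.coe_le_coe.1 (not_lt.1 hx), (WithBot.coe_lt_coe.1 hy).le⟩ rfl

theorem coe_lt (b : WithTop M) : IsConstantOff {x : M | x < b} ((↑) ⁻¹' {b}) := by
  intro x y hxy hdisj
  refine ⟨fun hx => ?_, fun hy => (WithTop.coe_le_coe.2 hxy).trans_lt hy⟩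
  by_contra hy
  have hb : b ≠ ⊤ := fun h => hy (h ▸ WithTop.coe_lt_top y)
  obtain ⟨b, rfl⟩ := WithTop.ne_top_iff_exists.1 hb
  exact disjoint_left.1 hdisj
    ⟨(WithTop.coe_lt_coe.1 hx).le, WithTop.coe_le_coe.1 (not_lt.1 hy)⟩ rfl

section OrderTopology

variable [TopologicalSpace M] [OrderTopology M] [NoMinOrder M] [NoMaxOrder M]

theorem frontier_subset (h : IsConstantOff s Q) (hQ : IsClosed Q) : frontier s ⊆ Q := by
  intro c hc
  by_contra hcQ
  obtain ⟨l, u, hclu, hlu⟩ := mem_nhds_iff_exists_Ioo_subset.1 (hQ.isOpen_compl.mem_nhds hcQ)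
  refine notMem_frontier_iff_eventually.2 ?_ hc
  filter_upwards [Ioo_mem_nhds hclu.1 hclu.2] with y hy
  have hdisj {x x' : M} (hx : x ∈ Ioo l u) (hx' : x' ∈ Ioo l u) : Disjoint (Icc x x') Q :=
    disjoint_left.2 fun z hz => hlu ⟨hx.1.trans_le hz.1, hz.2.trans_lt hx'.2⟩
  rcases le_total y c with hyc | hcy
  · exact h hyc (hdisj hy hclu)
  · exact (h hcy (hdisj hclu hy)).symm

variable [DenselyOrdered M]

theorem sdiff_singleton (h : IsConstantOff s Q) {q : M} (hq : q ∉ frontier s) :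
    IsConstantOff s (Q \ {q}) := by
  intro x y hxy hdisj
  have hconst {x' y' : M} (hle : x' ≤ y') (hsub : Icc x' y' ⊆ Icc x y) (hq' : q ∉ Icc x' y') :
      x' ∈ s ↔ y' ∈ s :=
    h hle <| disjoint_left.2 fun z hz hzQ =>
      disjoint_left.1 hdisj (hsub hz) ⟨hzQ, fun hzq => hq' (hzq ▸ hz)⟩
  by_cases hqxy : q ∈ Icc x y
  swap
  · exact hconst hxy Subset.rfl hqxy
  have hloc := notMem_frontier_iff_eventually.1 hq
  have hxq : x ∈ s ↔ q ∈ s := by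
    rcases hqxy.1.eq_or_lt with rfl | hlt
    · rfl
    obtain ⟨u, hu, hxu, huq⟩ :=
      ((hloc.filter_mono nhdsWithin_le_nhds).and (Ico_mem_nhdsLT hlt)).exists
    exact (hconst hxu (Icc_subset_Icc_right (huq.le.trans hqxy.2)) fun h => huq.not_ge h.2).trans hu
  have hqy : q ∈ s ↔ y ∈ s := by
    rcases hqxy.2.eq_or_lt with rfl | hlt
    · rfl
    obtain ⟨u, hu, hqu, huy⟩ :=
      ((hloc.filter_mono nhdsWithin_le_nhds).and (Ioc_mem_nhdsGT hlt)).exists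
    exact hu.symm.trans <|
      hconst huy (Icc_subset_Icc_left (hqxy.1.trans hqu.le)) fun h => hqu.not_ge h.1
  exact hxq.trans hqy

theorem sdiff_of_finite (h : IsConstantOff s Q) {F : Set M} (hF : F.Finite)
    (hFs : Disjoint F (frontier s)) : IsConstantOff s (Q \ F) := by
  induction F, hF using Set.Finite.induction_on with
  | empty => rwa [sdiff_empty]
  | insert _ _ ih =>
    rw [disjoint_insert_left] at hFs
    rw [← union_singleton, ← Set.sdiff_sdiff]
    exact (ih hFs.2).sdiff_singleton hFs.1

theorem frontier_of_finite (h : IsConstantOff s Q) (hQ : Q.Finite) :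
    IsConstantOff s (frontier s) :=
  (h.sdiff_of_finite hQ.sdiff disjoint_sdiff_left).mono fun _ hq =>
    by_contra fun hqs => hq.2 ⟨hq.1, hqs⟩

end OrderTopology

end IsConstantOff

namespace IsFinUnionPointsIntervals

theorem exists_finite_isConstantOff (hs : IsFinUnionPointsIntervals s) :
    ∃ Q : Set M, Q.Finite ∧ IsConstantOff s Q := by
  obtain ⟨P, I, rfl⟩ := hs
  refine ⟨_, ?_, (IsConstantOff.self _).union <| IsConstantOff.biUnion fun p _ =>
    (IsConstantOff.lt_coe p.1).inter (IsConstantOff.coe_lt p.2)⟩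
  refine P.finite_toSet.union (I.finite_toSet.biUnion fun p _ => ?_)
  exact ((finite_singleton _).preimage WithBot.coe_injective.injOn).union
    ((finite_singleton _).preimage WithTop.coe_injective.injOn)

variable [TopologicalSpace M] [OrderTopology M] [NoMinOrder M] [NoMaxOrder M]

theorem finite_frontier (hs : IsFinUnionPointsIntervals s) : (frontier s).Finite := by
  obtain ⟨Q, hQ, hsQ⟩ := hs.exists_finite_isConstantOff
  exact hQ.subset (hsQ.frontier_subset hQ.isClosed)

variable [DenselyOrdered M]

theorem isConstantOff_frontier (hs : IsFinUnionPointsIntervals s) :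
    IsConstantOff s (frontier s) := by
  obtain ⟨Q, hQ, hsQ⟩ := hs.exists_finite_isConstantOff
  exact hsQ.frontier_of_finite hQ

end IsFinUnionPointsIntervals

section Families

theorem exists_forall_Ioc_disjoint_or_forall_Iic_disjoint {F : Set M} (hF : F.Finite)
    {c : M} (hc : c ∉ F) :
    (∃ e ∈ F, e < c ∧ ∀ c' ∈ Ioc e c, Disjoint (Icc c' c) F) ∨
      ∀ c' ≤ c, Disjoint (Icc c' c) F := by
  have hlt {e : M} (he : e ∈ F) (hec : e ≤ c) : e < c := hec.lt_of_ne fun h => hc (h ▸ he)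
  rcases (F ∩ Iio c).eq_empty_or_nonempty with hempty | hne
  · refine .inr fun c' _ => disjoint_left.2 fun e he heF => ?_
    exact (hempty.subset ⟨heF, hlt heF he.2⟩ : e ∈ (∅ : Set M))
  · obtain ⟨e, ⟨heF, hec⟩, hmax⟩ := exists_max_image _ id (hF.inter_of_left _) hne
    refine .inl ⟨e, heF, hec, fun c' hc' => disjoint_left.2 fun e' he' he'F => ?_⟩
    exact (hc'.1.trans_le he'.1).not_ge (hmax e' ⟨he'F, hlt he'F he'.2⟩)

variable [TopologicalSpace M] [OrderTopology M] [DenselyOrdered M] [NoMinOrder M] [NoMaxOrder M]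
  {ι : Type*} {I : Set ι} {Y : ι → Set M}

theorem mem_iff_mem_of_disjoint_frontier_biUnion_frontier
    (hY : ∀ i ∈ I, IsFinUnionPointsIntervals (Y i))
    (hS : IsFinUnionPointsIntervals (⋃ i ∈ I, frontier (Y i))) {c c' : M} (hc'c : c' ≤ c)
    (hc : c ∉ ⋃ i ∈ I, frontier (Y i))
    (hdisj : Disjoint (Icc c' c) (frontier (⋃ i ∈ I, frontier (Y i)))) {i : ι} (hi : i ∈ I) :
    c' ∈ Y i ↔ c ∈ Y i := by
  refine (hY i hi).isConstantOff_frontier hc'c (disjoint_left.2 fun e he hei => hc ?_)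
  have hec := hS.isConstantOff_frontier he.2 (hdisj.mono_left (Icc_subset_Icc_left he.1))
  exact hec.1 (mem_biUnion hi hei)

theorem mem_frontier_or_forall_mem_iff_germ (hY : ∀ i ∈ I, IsFinUnionPointsIntervals (Y i))
    (hS : IsFinUnionPointsIntervals (⋃ i ∈ I, frontier (Y i))) (c : M) :
    (∃ i ∈ I, c ∈ frontier (Y i)) ∨ c ∈ frontier (⋃ i ∈ I, frontier (Y i)) ∨
      (∃ e ∈ frontier (⋃ i ∈ I, frontier (Y i)), ∀ i ∈ I, c ∈ Y i ↔ Y i ∈ 𝓝[>] e) ∨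
      ∀ i ∈ I, c ∈ Y i ↔ ∃ d, Iic d ⊆ Y i := by
  by_cases hcS : c ∈ ⋃ i ∈ I, frontier (Y i)
  · exact .inl (by simpa only [mem_iUnion, exists_prop] using hcS)
  by_cases hcF : c ∈ frontier (⋃ i ∈ I, frontier (Y i))
  · exact .inr (.inl hcF)
  have hconst {c' : M} (hc'c : c' ≤ c)
      (hdisj : Disjoint (Icc c' c) (frontier (⋃ i ∈ I, frontier (Y i)))) {i : ι} (hi : i ∈ I) :
      c' ∈ Y i ↔ c ∈ Y i :=
    mem_iff_mem_of_disjoint_frontier_biUnion_frontier hY hS hc'c hcS hdisj hi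
  rcases exists_forall_Ioc_disjoint_or_forall_Iic_disjoint hS.finite_frontier hcF with
    ⟨e, heF, hec, hdisj⟩ | hdisj
  · refine .inr (.inr (.inl ⟨e, heF, fun i hi => ?_⟩))
    have hev : ∀ᶠ c' in 𝓝[>] e, (c' ∈ Y i ↔ c ∈ Y i) := by
      filter_upwards [Ioc_mem_nhdsGT hec] with c' hc'
      exact hconst hc'.2 (hdisj c' hc') hi
    exact ((eventually_congr hev).trans eventually_const).symm
  · refine .inr (.inr (.inr fun i hi => ⟨fun hc => ⟨c, fun c' hc' => ?_⟩, fun ⟨d, hd⟩ => ?_⟩))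
    · exact (hconst hc' (hdisj c' hc') hi).2 hc
    · exact (hconst (min_le_right d c) (hdisj _ (min_le_right d c)) hi).1 (hd (min_le_left d c))

end Families

end Order

section Definability

variable {L : FirstOrder.Language} {M : Type*} [L.Structure M] {A : Set M} {α β : Type*}

theorem definable_exists {P : (α → M) → M → Prop}
    (hP : A.Definable L {w : α ⊕ Unit → M | P (w ∘ Sum.inl) (w (Sum.inr ()))}) :
    A.Definable L {v | ∃ c, P v c} := by
  convert! hP.exists_of_finite using 1
  ext v
  exact ⟨fun ⟨c, hc⟩ => ⟨fun _ => c, hc⟩, fun ⟨u, hu⟩ => ⟨u (), hu⟩⟩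

/-- The sets `X v ⊆ M`, for `v ∈ M^α`, form an `A`-definable family: the relation `c ∈ X v` is
`A`-definable, with `c` encoded as the extra coordinate `Sum.inr ()`. -/
def DefinableFamily (L : FirstOrder.Language) {M : Type*} [L.Structure M] (A : Set M) {α : Type*}
    (X : (α → M) → Set M) : Prop :=
  A.Definable L {w : α ⊕ Unit → M | w (Sum.inr ()) ∈ X (w ∘ Sum.inl)}

namespace DefinableFamily

variable {X Y : (α → M) → Set M}

theorem definable_mem (hX : DefinableFamily L A X) (f : α → β) (i : β) :
    A.Definable L {v : β → M | v i ∈ X (v ∘ f)} :=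
  hX.preimage_comp (Sum.elim f fun _ => i)

theorem reindex (hX : DefinableFamily L A X) (f : α → β) :
    DefinableFamily L A fun v : β → M => X (v ∘ f) :=
  hX.definable_mem (Sum.inl ∘ f) (Sum.inr ())

theorem compl (hX : DefinableFamily L A X) : DefinableFamily L A fun v => (X v)ᶜ :=
  Set.Definable.compl hX

theorem inter (hX : DefinableFamily L A X) (hY : DefinableFamily L A Y) :
    DefinableFamily L A fun v => X v ∩ Y v :=
  Set.Definable.inter hX hY

theorem sdiff (hX : DefinableFamily L A X) (hY : DefinableFamily L A Y) :
    DefinableFamily L A fun v => X v \ Y v :=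
  Set.Definable.sdiff hX hY

theorem definable_nonempty (hX : DefinableFamily L A X) : A.Definable L {v | (X v).Nonempty} :=
  definable_exists hX

theorem definable_subset (hX : DefinableFamily L A X) (hY : DefinableFamily L A Y) :
    A.Definable L {v | X v ⊆ Y v} := by
  convert! (hX.sdiff hY).definable_nonempty.compl using 1
  ext v
  simp only [mem_ofPred_eq, mem_compl_iff, not_nonempty_iff_eq_empty, sdiff_eq_empty]

theorem biUnion [Finite α] {D : Set (α → M)} (hD : A.Definable L D)
    {X : (α ⊕ β → M) → Set M} (hX : DefinableFamily L A X) :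
    DefinableFamily L A fun b => ⋃ x ∈ D, X (Sum.elim x b) := by
  have hmem : A.Definable L {w : (β ⊕ Unit) ⊕ α → M | w ∘ Sum.inr ∈ D ∧
      w (Sum.inl (Sum.inr ())) ∈ X (w ∘ Sum.elim Sum.inr (Sum.inl ∘ Sum.inl))} :=
    (hD.preimage_comp Sum.inr).inter (hX.definable_mem _ _)
  unfold DefinableFamily
  convert! hmem.exists_of_finite using 1
  ext w
  simp only [mem_ofPred_eq, mem_iUnion, exists_prop, Sum.comp_elim, ← Function.comp_assoc,
    Sum.elim_comp_inl, Sum.elim_comp_inr, Sum.elim_inl]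

section Parameters

variable [Finite α]

theorem definable₁ (hX : DefinableFamily L univ X) (v : α → M) :
    (univ : Set M).Definable₁ L (X v) := by
  have hmap : (univ : Set M).DefinableMap L
      fun x : Fin 1 → M => (Sum.elim v fun _ => x 0 : α ⊕ Unit → M) := by
    rintro (i | _)
    · exact L.definableFun_const _ (mem_univ (v i))
    · exact Set.DefinableFun.proj L
  exact Set.Definable.preimage_map hmap hX

theorem specialize [Finite β] {X : (α ⊕ β → M) → Set M} (hX : DefinableFamily L univ X)
    (x : α → M) : DefinableFamily L univ fun b => X (Sum.elim x b) := by
  have hmap : (univ : Set M).DefinableMap L fun w : β ⊕ Unit → M =>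
      (Sum.elim (Sum.elim x (w ∘ Sum.inl)) (w ∘ Sum.inr) : (α ⊕ β) ⊕ Unit → M) := by
    rintro ((i | _) | _)
    · exact L.definableFun_const _ (mem_univ (x i))
    all_goals exact Set.DefinableFun.proj L
  exact Set.Definable.preimage_map hmap hX

end Parameters

end DefinableFamily

/-- The order of `M` is `A`-definable. -/
def DefinableOrder (L : FirstOrder.Language) {M : Type*} [L.Structure M] [LinearOrder M]
    (A : Set M) : Prop :=
  A.Definable L {x : Fin 2 → M | x 0 < x 1}

namespace DefinableOrder

variable [LinearOrder M]

theorem definable_lt (hlt : DefinableOrder L A) (i j : α) : A.Definable L {v : α → M | v i < v j} :=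
  Set.Definable.preimage_comp ![i, j] hlt

theorem definableFamily_Iio (hlt : DefinableOrder L A) (i : α) :
    DefinableFamily L A fun v : α → M => Iio (v i) :=
  hlt.definable_lt (Sum.inr ()) (Sum.inl i)

theorem definableFamily_Ioi (hlt : DefinableOrder L A) (i : α) :
    DefinableFamily L A fun v : α → M => Ioi (v i) :=
  hlt.definable_lt (Sum.inl i) (Sum.inr ())

theorem definableFamily_Ici (hlt : DefinableOrder L A) (i : α) :
    DefinableFamily L A fun v : α → M => Ici (v i) := by
  simpa only [compl_Iio] using (hlt.definableFamily_Iio i).compl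

theorem definableFamily_Iic (hlt : DefinableOrder L A) (i : α) :
    DefinableFamily L A fun v : α → M => Iic (v i) := by
  simpa only [compl_Ioi] using (hlt.definableFamily_Ioi i).compl

theorem definableFamily_Ioo (hlt : DefinableOrder L A) (i j : α) :
    DefinableFamily L A fun v : α → M => Ioo (v i) (v j) :=
  (hlt.definableFamily_Ioi i).inter (hlt.definableFamily_Iio j)

end DefinableOrder

namespace DefinableFamily

variable [LinearOrder M] {X : (α → M) → Set M}

theorem isFinUnionPointsIntervals [Finite α] (hM : IsOMinimal L M)
    (hX : DefinableFamily L univ X) (v : α → M) : IsFinUnionPointsIntervals (X v) :=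
  hM.tame _ (hX.definable₁ v)

theorem definable_exists_Iic_subset (hlt : DefinableOrder L A) (hX : DefinableFamily L A X) :
    A.Definable L {v | ∃ d, Iic d ⊆ X v} :=
  definable_exists ((hlt.definableFamily_Iic (Sum.inr ())).definable_subset (hX.reindex Sum.inl))

theorem isLeast (hlt : DefinableOrder L A) (hX : DefinableFamily L A X) :
    DefinableFamily L A fun v => {c | IsLeast (X v) c} :=
  Set.Definable.inter hX <|
    (hX.reindex Sum.inl).definable_subset (hlt.definableFamily_Ici (Sum.inr ()))

variable [TopologicalSpace M] [OrderTopology M] [NoMaxOrder M]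

theorem mem_nhdsGT (hlt : DefinableOrder L A) (hX : DefinableFamily L A X) :
    DefinableFamily L A fun v => {e | X v ∈ 𝓝[>] e} := by
  simp only [DefinableFamily, mem_nhdsGT_iff_exists_Ioo_subset]
  exact definable_exists <| (hlt.definable_lt (Sum.inl (Sum.inr ())) (Sum.inr ())).inter <|
    (hlt.definableFamily_Ioo (Sum.inl (Sum.inr ())) (Sum.inr ())).definable_subset
      (hX.reindex (Sum.inl ∘ Sum.inl))

variable [NoMinOrder M]

theorem interior (hlt : DefinableOrder L A) (hX : DefinableFamily L A X) :
    DefinableFamily L A fun v => interior (X v) := by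
  simp only [DefinableFamily, mem_interior_iff_mem_nhds, mem_nhds_iff_exists_Ioo_subset]
  refine definable_exists (definable_exists (Set.Definable.inter ?_ ?_))
  · exact (hlt.definableFamily_Ioo (Sum.inl (Sum.inr ())) (Sum.inr ())).definable_mem id
      (Sum.inl (Sum.inl (Sum.inr ())))
  · exact (hlt.definableFamily_Ioo (Sum.inl (Sum.inr ())) (Sum.inr ())).definable_subset
      (hX.reindex (Sum.inl ∘ Sum.inl ∘ Sum.inl))

theorem frontier (hlt : DefinableOrder L A) (hX : DefinableFamily L A X) :
    DefinableFamily L A fun v => frontier (X v) := by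
  simpa only [frontier_eq_closure_inter_closure, closure_eq_compl_interior_compl, compl_compl] using
    (hX.compl.interior hlt).compl.inter (hX.interior hlt).compl

end DefinableFamily

end Definability

section DropLeast

variable {M : Type*} [LinearOrder M]

/-- The set `s` with its least element, if there is one, removed. Iterating this operation
enumerates a finite set uniformly definably. -/
def dropLeast (s : Set M) : Set M :=
  s \ {c | IsLeast s c}

theorem dropLeast_ssubset {s : Set M} (hs : s.Finite) (hne : s.Nonempty) : dropLeast s ⊂ s := by
  obtain ⟨m, hm, hmin⟩ := exists_min_image s id hs hne
  exact ⟨sdiff_subset, fun hsub => (hsub hm).2 ⟨hm, hmin⟩⟩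

theorem exists_isLeast_iterate_dropLeast {s : Set M} (hs : s.Finite) {c : M} (hc : c ∈ s) :
    ∃ j : ℕ, IsLeast (dropLeast^[j] s) c := by
  induction hn : s.ncard using Nat.strong_induction_on generalizing s with
  | _ n ih =>
    by_cases hleast : IsLeast s c
    · exact ⟨0, hleast⟩
    have hlt : (dropLeast s).ncard < n := hn ▸ ncard_lt_ncard (dropLeast_ssubset hs ⟨c, hc⟩) hs
    obtain ⟨j, hj⟩ := ih _ hlt hs.sdiff ⟨hc, hleast⟩ rfl
    exact ⟨j + 1, hj⟩

namespace DefinableFamily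

variable {L : FirstOrder.Language} [L.Structure M] {A : Set M} {α : Type*} {X : (α → M) → Set M}

theorem iterate_dropLeast (hlt : DefinableOrder L A) (hX : DefinableFamily L A X) (j : ℕ) :
    DefinableFamily L A fun v => dropLeast^[j] (X v) := by
  induction j with
  | zero => exact hX
  | succ j ih =>
    simp only [Function.iterate_succ_apply']
    exact ih.sdiff (ih.isLeast hlt)

end DefinableFamily

end DropLeast

section Traces

variable {L : FirstOrder.Language} {M : Type*} [L.Structure M] {α β γ : Type*} {D : Set (α → M)}

/-- The subsets of `D ⊆ M^α` cut out by the fibres over `M^β` of a set `R ⊆ M^α × M^β`. -/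
def traces (D : Set (α → M)) (R : Set (α ⊕ β → M)) : Set (Set (α → M)) :=
  range fun b : β → M => {x ∈ D | Sum.elim x b ∈ R}

/-- Every definable family of subsets of `M^α` with parameters ranging over `M^β` has only countably
many traces on `D`. -/
def HasCountableTraces (L : FirstOrder.Language) {M : Type*} [L.Structure M] {α : Type*}
    (D : Set (α → M)) (β : Type*) : Prop :=
  ∀ R : Set (α ⊕ β → M), (univ : Set M).Definable L R → (traces D R).Countable

namespace HasCountableTraces

theorem of_isEmpty [IsEmpty β] : HasCountableTraces L D β := fun _ _ => countable_range _

theorem of_equiv (e : β ≃ γ) (hβ : HasCountableTraces L D β) : HasCountableTraces L D γ := by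
  intro R hR
  refine (hβ _ (hR.preimage_comp (Sum.map id e.symm))).mono ?_
  rintro _ ⟨c, rfl⟩
  refine ⟨c ∘ e, ?_⟩
  simp only [Sum.elim_comp_map, Function.comp_assoc, Equiv.self_comp_symm, Function.comp_id,
    mem_preimage]

variable {X : (α ⊕ β → M) → Set M} {Z : (β → M) → Set M}

theorem countable_of_subsingleton (hβ : HasCountableTraces L D β)
    (hX : DefinableFamily L univ X) (hZ : DefinableFamily L univ Z)
    (hZs : ∀ b, (Z b).Subsingleton) :
    {T | ∃ b, ∃ c ∈ Z b, T = {x ∈ D | c ∈ X (Sum.elim x b)}}.Countable := by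
  refine (hβ _ ((hZ.reindex Sum.inr).inter hX).definable_nonempty).mono ?_
  rintro _ ⟨b, c, hc, rfl⟩
  refine ⟨b, sep_ext_iff.2 fun x _ => ?_⟩
  exact ⟨fun ⟨c', hc', hcX⟩ => hZs b hc' hc ▸ hcX, fun hcX => ⟨c, hc, hcX⟩⟩

variable [LinearOrder M]

theorem countable_of_finite (hlt : DefinableOrder L (univ : Set M))
    (hβ : HasCountableTraces L D β) (hX : DefinableFamily L univ X)
    (hZ : DefinableFamily L univ Z) (hZf : ∀ b, (Z b).Finite) :
    {T | ∃ b, ∃ c ∈ Z b, T = {x ∈ D | c ∈ X (Sum.elim x b)}}.Countable := by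
  refine (countable_iUnion fun j => hβ.countable_of_subsingleton hX
    ((hZ.iterate_dropLeast hlt j).isLeast hlt) fun _ _ hc _ hc' => hc.unique hc').mono ?_
  rintro _ ⟨b, c, hc, rfl⟩
  obtain ⟨j, hj⟩ := exists_isLeast_iterate_dropLeast (hZf b) hc
  exact mem_iUnion.2 ⟨j, b, c, hj, rfl⟩

variable [Finite α] [Finite β]

theorem countable_of_definableFamily (hM : IsOMinimal L M) (hD : (univ : Set M).Definable L D)
    (hDc : D.Countable) (hβ : HasCountableTraces L D β) (hX : DefinableFamily L univ X) :
    {T | ∃ b, ∃ c, T = {x ∈ D | c ∈ X (Sum.elim x b)}}.Countable := by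
  let : TopologicalSpace M := Preorder.topology M
  have : OrderTopology M := ⟨rfl⟩
  have := hM.denselyOrdered
  have := hM.noMinOrder
  have := hM.noMaxOrder
  have hlt : DefinableOrder L (univ : Set M) := hM.definable_lt.mono (empty_subset _)
  have hS := DefinableFamily.biUnion hD (hX.frontier hlt)
  have hSf := fun b => (hS.isFinUnionPointsIntervals hM b).finite_frontier
  have hfrontier := hDc.biUnion fun x _ => hβ.countable_of_finite hlt hX
    ((hX.specialize x).frontier hlt) fun b =>
      ((hX.specialize x).isFinUnionPointsIntervals hM b).finite_frontier
  have hS_frontier := hβ.countable_of_finite hlt hX (hS.frontier hlt) hSf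
  have hgerm := hβ.countable_of_finite hlt (hX.mem_nhdsGT hlt) (hS.frontier hlt) hSf
  have hgerm_bot := hβ _ (hX.definable_exists_Iic_subset hlt)
  refine (hfrontier.union (hS_frontier.union (hgerm.union hgerm_bot))).mono ?_
  rintro _ ⟨b, c, rfl⟩
  rcases mem_frontier_or_forall_mem_iff_germ (I := D)
    (fun x _ => hX.isFinUnionPointsIntervals hM (Sum.elim x b))
    (hS.isFinUnionPointsIntervals hM b) c with
    ⟨x, hx, hc⟩ | hc | ⟨e, he, hce⟩ | hc
  · exact .inl (mem_biUnion hx ⟨b, c, hc, rfl⟩)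
  · exact .inr (.inl ⟨b, c, hc, rfl⟩)
  · exact .inr (.inr (.inl ⟨b, e, he, sep_ext_iff.2 hce⟩))
  · exact .inr (.inr (.inr ⟨b, (sep_ext_iff.2 hc).symm⟩))

theorem sum_unit (hM : IsOMinimal L M) (hD : (univ : Set M).Definable L D) (hDc : D.Countable)
    (hβ : HasCountableTraces L D β) : HasCountableTraces L D (β ⊕ Unit) := by
  intro R hR
  have hX : DefinableFamily L univ fun v : α ⊕ β → M =>
      {c | Sum.elim (v ∘ Sum.inl) (Sum.elim (v ∘ Sum.inr) fun _ => c) ∈ R} := by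
    unfold DefinableFamily
    convert! hR.preimage_comp (Equiv.sumAssoc α β Unit).symm using 1
    ext w
    refine iff_of_eq (congrArg (· ∈ R) (funext ?_))
    rintro (_ | _ | _) <;> rfl
  refine (hβ.countable_of_definableFamily hM hD hDc hX).mono ?_
  rintro _ ⟨b, rfl⟩
  refine ⟨b ∘ Sum.inl, b (Sum.inr ()), sep_ext_iff.2 fun x _ => ?_⟩
  exact iff_of_eq (congrArg (Sum.elim x · ∈ R) (Sum.elim_comp_inl_inr b).symm)

end HasCountableTraces

theorem IsOMinimal.hasCountableTraces [LinearOrder M] [Finite α] (hM : IsOMinimal L M)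
    (hD : (univ : Set M).Definable L D) (hDc : D.Countable) (β : Type*) [Finite β] :
    HasCountableTraces L D β := by
  induction β using Finite.induction_empty_option with
  | of_equiv e hβ => exact hβ.of_equiv e
  | h_empty => exact .of_isEmpty
  | h_option hβ => exact (hβ.sum_unit hM hD hDc).of_equiv (Equiv.optionEquivSumPUnit.{0} _).symm

theorem IsDefinableTopSpace.secondCountableTopology [LinearOrder M] (hM : IsOMinimal L M) {n : ℕ}
    {A : Set (Fin n → M)} [t : TopologicalSpace A] (h : IsDefinableTopSpace L A t)
    (hA : A.Countable) : SecondCountableTopology A := by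
  obtain ⟨hAdef, k, ψ, S, -, hbasis⟩ := h
  have hψ : (univ : Set M).Definable L {w : Fin n ⊕ Fin k → M | ψ.Realize w} :=
    (empty_definable_iff.2 ⟨ψ, rfl⟩).mono (empty_subset _)
  have htraces := hM.hasCountableTraces hAdef hA (Fin k) _ hψ
  refine hbasis.secondCountableTopology ((htraces.image fun T => (↑) ⁻¹' T).mono ?_)
  rintro _ ⟨b, -, rfl⟩
  refine ⟨_, ⟨b, rfl⟩, ?_⟩
  ext x
  exact and_iff_right x.2

end Traces

section Appert

/-- The proportion of `{1, …, m}` that lies in `U`; it is `0` for `m = 0`. -/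
noncomputable def initialDensity (U : Set ℕ) (m : ℕ) : ℝ :=
  (Nat.card ↥(U ∩ Icc 1 m) : ℝ) / m

theorem initialDensity_le_one (U : Set ℕ) (m : ℕ) : initialDensity U m ≤ 1 := by
  refine div_le_one_of_le₀ ?_ m.cast_nonneg
  calc (Nat.card ↥(U ∩ Icc 1 m) : ℝ)
      ≤ Nat.card ↥(Icc 1 m) := mod_cast Nat.card_mono (finite_Icc 1 m) inter_subset_right
    _ = m := by simp

theorem tendsto_initialDensity_zero {U : Set ℕ} (hU : U.Finite) :
    Tendsto (initialDensity U) atTop (𝓝 0) := by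
  refine squeeze_zero (fun m => by unfold initialDensity; positivity) (fun m => ?_)
    (tendsto_const_div_atTop_nhds_zero_nat (Nat.card U : ℝ))
  exact div_le_div_of_nonneg_right (mod_cast Nat.card_mono hU inter_subset_left) m.cast_nonneg

theorem infinite_of_tendsto_initialDensity_one {U : Set ℕ}
    (hU : Tendsto (initialDensity U) atTop (𝓝 1)) : U.Infinite := fun hfin =>
  zero_ne_one (tendsto_nhds_unique (tendsto_initialDensity_zero hfin) hU)

theorem le_card_compl_range_add_sqrt {x : ℕ → ℕ} (hx : ∀ i, (i + 1) ^ 2 ≤ x i) (m : ℕ) :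
    m ≤ Nat.card ↥((range x)ᶜ ∩ Icc 1 m) + m.sqrt := by
  have hcover : Icc 1 m ⊆ ((range x)ᶜ ∩ Icc 1 m) ∪ x '' Iio m.sqrt := by
    intro y hy
    by_cases hyx : y ∈ range x
    · obtain ⟨i, rfl⟩ := hyx
      exact .inr ⟨i, Nat.le_sqrt'.2 ((hx i).trans hy.2), rfl⟩
    · exact .inl ⟨hyx, hy⟩
  calc m = (Icc 1 m).ncard := by simp [← Nat.card_coe_set_eq]
    _ ≤ (((range x)ᶜ ∩ Icc 1 m) ∪ x '' Iio m.sqrt).ncard :=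
      ncard_le_ncard hcover (((finite_Icc 1 m).inter_of_right _).union ((finite_Iio _).image x))
    _ ≤ ((range x)ᶜ ∩ Icc 1 m).ncard + (x '' Iio m.sqrt).ncard := ncard_union_le _ _
    _ ≤ ((range x)ᶜ ∩ Icc 1 m).ncard + (Iio m.sqrt).ncard :=
      Nat.add_le_add_left (ncard_image_le (finite_Iio _)) _
    _ = Nat.card ↥((range x)ᶜ ∩ Icc 1 m) + m.sqrt := by simp [← Nat.card_coe_set_eq]

theorem tendsto_initialDensity_compl_range {x : ℕ → ℕ} (hx : ∀ i, (i + 1) ^ 2 ≤ x i) :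
    Tendsto (initialDensity (range x)ᶜ) atTop (𝓝 1) := by
  have hlim : Tendsto (fun m : ℕ => 1 - (√(m : ℝ))⁻¹) atTop (𝓝 1) := by
    simpa using (tendsto_inv_atTop_zero.comp
      (Real.tendsto_sqrt_atTop.comp tendsto_natCast_atTop_atTop)).const_sub (1 : ℝ)
  refine tendsto_of_tendsto_of_tendsto_of_le_of_le' hlim tendsto_const_nhds ?_
    (.of_forall (initialDensity_le_one _))
  filter_upwards [eventually_gt_atTop 0] with m hm
  have hm : (0 : ℝ) < m := mod_cast hm
  have hcard : (m : ℝ) ≤ Nat.card ↥((range x)ᶜ ∩ Icc 1 m) + √m :=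
    calc (m : ℝ) ≤ Nat.card ↥((range x)ᶜ ∩ Icc 1 m) + (m.sqrt : ℝ) :=
          mod_cast le_card_compl_range_add_sqrt hx m
      _ ≤ _ := by
        gcongr
        exact Real.nat_sqrt_le_real_sqrt
  calc 1 - (√(m : ℝ))⁻¹ = (m - √m) / m := by
        rw [sub_div, div_self hm.ne', Real.sqrt_div_self', one_div]
    _ ≤ initialDensity (range x)ᶜ m := by
        unfold initialDensity
        gcongr
        linarith

theorem exists_appertIsOpen_forall_not_subset {U : ℕ → Set ℕ} (h0 : ∀ i, 0 ∈ U i)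
    (hU : ∀ i, AppertIsOpen (U i)) : ∃ V, 0 ∈ V ∧ AppertIsOpen V ∧ ∀ i, ¬ U i ⊆ V := by
  have hinf (i : ℕ) : (U i).Infinite :=
    infinite_of_tendsto_initialDensity_one ((hU i).resolve_left (not_not.2 (h0 i)))
  choose x hxU hx using fun i => (hinf i).exists_gt ((i + 1) ^ 2)
  refine ⟨(range x)ᶜ, ?_, .inr (tendsto_initialDensity_compl_range fun i => (hx i).le),
    fun i hi => hi (hxU i) (mem_range_self i)⟩
  rintro ⟨i, hi⟩
  exact Nat.not_lt_zero _ (hi ▸ hx i)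

theorem not_firstCountableTopology_of_appertIsOpen {τ : TopologicalSpace ℕ}
    (hτ : ∀ U : Set ℕ, IsOpen[τ] U ↔ AppertIsOpen U) : ¬ @FirstCountableTopology ℕ τ := by
  intro hfc
  obtain ⟨B, hB⟩ := (@nhds ℕ τ 0).exists_antitone_basis
  have hBnhds (i : ℕ) := (@mem_nhds_iff ℕ τ 0 (B i)).1 (hB.mem i)
  choose U hUB hUopen h0U using hBnhds
  obtain ⟨V, h0V, hV, hUV⟩ :=
    exists_appertIsOpen_forall_not_subset h0U fun i => (hτ _).1 (hUopen i)
  obtain ⟨i, hi⟩ := hB.mem_iff.1 (@IsOpen.mem_nhds ℕ τ 0 V ((hτ V).2 hV) h0V)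
  exact hUV i ((hUB i).trans hi)

end Appert

/-- No topological space definable in an o-minimal structure is homeomorphic to the Appert
space, i.e. to `ℕ` equipped with the topology whose open sets are exactly those `U` with
`0 ∉ U` or `lim_{n→∞} |U ∩ {1, …, n}| / n = 1`. -/
theorem no_definable_top_space_homeomorphic_to_appert
    {L : FirstOrder.Language.{u, u}} {M : Type u} [L.Structure M] [LinearOrder M]
    (hM : IsOMinimal L M) {n : ℕ} (A : Set (Fin n → M)) (t : TopologicalSpace A)
    (h : IsDefinableTopSpace L A t)
    (τ : TopologicalSpace ℕ) (hτ : ∀ U : Set ℕ, τ.IsOpen U ↔ AppertIsOpen U) :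
    IsEmpty (@Homeomorph A ℕ t τ) := by
  refine ⟨fun φ => not_firstCountableTopology_of_appertIsOpen hτ ?_⟩
  have hA : A.Countable := countable_coe_iff.1 φ.injective.countable
  have := h.secondCountableTopology hM hA
  have := φ.symm.secondCountableTopology
  infer_instance
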